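/- (Mapping theorem, exact SU(2) time-dependent case.) Let g ≠ 0, α ≠ 0 be real, let φ : ℝ → ℝ be twice differentiable, and define gauge potentials A^a_ν : ℝ⁴ → ℝ (color index a ∈ {1,2,3}, Lorentz index ν ∈ {0,1,2,3}) by A^a_ν(x) := φ(x₀) if ν = a and A^a_ν(x) := 0 otherwise. Then A satisfies the Lorenz gauge condition ∂^μ A^a_μ = 0 for every a, and A satisfies the full vacuum SU(2) Yang-Mills field equations ∂^μ∂_μ A^a_ν − (1 − 1/α) ∂_ν(∂^μ A^a_μ) + g ε^{abc} A^{bμ}(∂_μ A^c_ν − ∂_ν A^c_μ) + g ε^{abc} ∂^μ(A^b_μ A^c_ν) + g² ε^{abc} ε^{cde} A^{bμ} A^d_μ A^e_ν = 0 (for all a, ν) if and only if φ satisfies the scalar equation φ'' + 2g²φ³ = 0, i.e. □φ + λφ³ = 0 with λ = N g² for N = 2. Thus an extremum of the quartic scalar action with λ = Ng², taken with only time dependence, is an extremum of the SU(2) Yang-Mills action under the mapping A^a_μ = η^a_μ φ. -/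

import Mathlib

open Real

/-- Partial derivative of `f : (Fin 4 → ℝ) → ℝ` along the `μ`-th coordinate. -/
noncomputable def pd (μ : Fin 4) (f : (Fin 4 → ℝ) → ℝ) : (Fin 4 → ℝ) → ℝ :=
  fun x => deriv (fun t => f (Function.update x μ t)) (x μ)

/-- Minkowski metric `diag(1, −1, −1, −1)` (diagonal entries). -/
def eta : Fin 4 → ℝ := fun μ => if μ = 0 then 1 else -1

/-- Levi-Civita symbol on three (0-based) indices, `ε 0 1 2 = 1`. -/
noncomputable def eps (a b c : Fin 3) : ℝ :=
  ((b.val : ℝ) - (a.val : ℝ)) * ((c.val : ℝ) - (b.val : ℝ)) * ((c.val : ℝ) - (a.val : ℝ)) / 2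

/-- The mapped gauge potential `A^a_ν(x) = η^a_ν φ(x₀)`, with `η^a_ν = 1` iff the
Lorentz index `ν` equals the (spatial) color index `a` and `0` otherwise. -/
def ymA (φ : ℝ → ℝ) (a : Fin 3) (ν : Fin 4) : (Fin 4 → ℝ) → ℝ :=
  fun x => if (ν.val : ℕ) = a.val + 1 then φ (x 0) else 0

/-- The left-hand side of the vacuum SU(2) Yang-Mills field equations
`∂^μ∂_μ A^a_ν − (1 − 1/α)∂_ν(∂^μ A^a_μ) + g ε^{abc} A^{bμ}(∂_μ A^c_ν − ∂_ν A^c_μ)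
 + g ε^{abc} ∂^μ(A^b_μ A^c_ν) + g² ε^{abc} ε^{cde} A^{bμ} A^d_μ A^e_ν`. -/
noncomputable def ymLHS (g α : ℝ) (φ : ℝ → ℝ) (a : Fin 3) (ν : Fin 4) (x : Fin 4 → ℝ) : ℝ :=
  (∑ μ : Fin 4, eta μ * pd μ (pd μ (ymA φ a ν)) x)
  - (1 - 1 / α) * pd ν (fun x' => ∑ μ : Fin 4, eta μ * pd μ (ymA φ a μ) x') x
  + g * ∑ b : Fin 3, ∑ c : Fin 3, eps a b c *
      ∑ μ : Fin 4, (eta μ * ymA φ b μ x) * (pd μ (ymA φ c ν) x - pd ν (ymA φ c μ) x)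
  + g * ∑ b : Fin 3, ∑ c : Fin 3, eps a b c *
      ∑ μ : Fin 4, eta μ * pd μ (fun x' => ymA φ b μ x' * ymA φ c ν x') x
  + g ^ 2 * ∑ b : Fin 3, ∑ c : Fin 3, ∑ d : Fin 3, ∑ e : Fin 3, eps a b c * eps c d e *
      ∑ μ : Fin 4, (eta μ * ymA φ b μ x) * ymA φ d μ x * ymA φ e ν x

/-!
The potential has no time component and depends on time only, so `A^{bμ} v_μ = -φ v_b` for every
covector `v`, and each single term of a divergence `∂^μ (A^b_μ f(x₀))` vanishes. The terms of
first order in `g` vanish: the divergence for this reason, `A^{bμ} ∂_μ A^c_ν = -φ ∂_b A^c_ν`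
because `b` is a spatial direction, and `A^{bμ} ∂_ν A^c_μ` because it is symmetric in `b` and `c`.
In the cubic term `A^{bμ} A^d_μ = -φ² δ^{bd}`, and the contraction of the two Levi-Civita symbols
leaves `(3 - 1) φ² A^a_ν`; this is the factor `N = 2`. The left-hand side of the field equations
is therefore the potential built from `φ'' + 2 g² φ³`.
-/

section PartialDerivative

lemma pd_eq_zero_of_dependsOn {f : (Fin 4 → ℝ) → ℝ} {s : Set (Fin 4)} {μ : Fin 4}
    (hf : DependsOn f s) (hμ : μ ∉ s) : pd μ f = 0 := by
  funext x
  have hconst : ∀ t, f (Function.update x μ t) = f x := fun t =>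
    hf fun κ hκ => Function.update_of_ne (ne_of_mem_of_not_mem hκ hμ) t x
  simp [pd, hconst]

lemma pd_zero_fun (μ : Fin 4) : pd μ 0 = 0 :=
  pd_eq_zero_of_dependsOn (dependsOn_const 0) (Set.notMem_empty μ)

end PartialDerivative

section LeviCivita

lemma eps_self_right (a b : Fin 3) : eps a b b = 0 := by
  simp [eps]

lemma sum_eps_mul_eps (a b d e : Fin 3) :
    ∑ c, eps a b c * eps c d e =
      (if a = d ∧ b = e then 1 else 0) - (if a = e ∧ b = d then 1 else 0) := by
  fin_cases a <;> fin_cases b <;> fin_cases d <;> fin_cases e <;>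
    norm_num [Fin.sum_univ_three, eps]

lemma sum_eps_mul_eps_mul (a : Fin 3) (T : Fin 3 → Fin 3 → Fin 3 → ℝ) :
    ∑ b, ∑ c, ∑ d, ∑ e, eps a b c * eps c d e * T b d e = ∑ b, (T b a b - T b b a) := by
  refine Finset.sum_congr rfl fun b _ => ?_
  calc ∑ c, ∑ d, ∑ e, eps a b c * eps c d e * T b d e
      = ∑ d, ∑ e, (∑ c, eps a b c * eps c d e) * T b d e := by
        simp only [Finset.sum_mul]
        rw [Finset.sum_comm]
        exact Finset.sum_congr rfl fun d _ => Finset.sum_comm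
    _ = T b a b - T b b a := by
        simp [sum_eps_mul_eps, sub_mul, ite_and, Finset.sum_sub_distrib]

end LeviCivita

section Potential

variable (φ : ℝ → ℝ)

lemma ymA_zero (a : Fin 3) : ymA φ a 0 = 0 := by
  funext x
  simp [ymA]

lemma ymA_succ (a i : Fin 3) (x : Fin 4 → ℝ) :
    ymA φ a i.succ x = if i = a then φ (x 0) else 0 := by
  simp [ymA, Fin.ext_iff]

lemma forall_ymA_eq_zero_iff :
    (∀ (a : Fin 3) (ν : Fin 4) (x : Fin 4 → ℝ), ymA φ a ν x = 0) ↔ ∀ t, φ t = 0 := by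
  refine ⟨fun h t => ?_, fun h a ν x => by simp [ymA, h]⟩
  simpa only [ymA_succ, if_true] using h 0 (Fin.succ 0) (fun _ => t)

lemma dependsOn_ymA (a : Fin 3) (ν : Fin 4) : DependsOn (ymA φ a ν) {0} := by
  intro x y hxy
  simp only [ymA, hxy 0 rfl]

lemma pd_zero_ymA (a : Fin 3) (ν : Fin 4) : pd 0 (ymA φ a ν) = ymA (deriv φ) a ν := by
  funext x
  by_cases hν : (ν : ℕ) = a + 1 <;> simp [pd, ymA, hν]

lemma pd_ymA_of_ne {μ : Fin 4} (hμ : μ ≠ 0) (a : Fin 3) (ν : Fin 4) : pd μ (ymA φ a ν) = 0 :=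
  pd_eq_zero_of_dependsOn (dependsOn_ymA φ a ν) hμ

lemma pd_ymA_mul (a : Fin 3) (μ : Fin 4) {f : (Fin 4 → ℝ) → ℝ} (hf : DependsOn f {0}) :
    pd μ (fun x => ymA φ a μ x * f x) = 0 := by
  obtain rfl | hμ := eq_or_ne μ 0
  · simp only [ymA_zero, Pi.zero_apply, zero_mul]
    exact pd_zero_fun 0
  · have hprod : DependsOn (fun x => ymA φ a μ x * f x) {0} := fun x y hxy => by
      simp only [dependsOn_ymA φ a μ hxy, hf hxy]
    exact pd_eq_zero_of_dependsOn hprod hμ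

lemma pd_ymA_self (a : Fin 3) (μ : Fin 4) : pd μ (ymA φ a μ) = 0 := by
  simpa using pd_ymA_mul φ a μ (f := fun _ => 1) (fun _ _ _ => rfl)

lemma sum_eta_mul_pd_pd_ymA (a : Fin 3) (ν : Fin 4) (x : Fin 4 → ℝ) :
    ∑ μ, eta μ * pd μ (pd μ (ymA φ a ν)) x = ymA (deriv (deriv φ)) a ν x := by
  rw [Fin.sum_univ_succ]
  simp [pd_zero_ymA, pd_ymA_of_ne, pd_zero_fun, eta]

lemma sum_eta_mul_ymA_mul (b : Fin 3) (x : Fin 4 → ℝ) (v : Fin 4 → ℝ) :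
    ∑ μ, eta μ * ymA φ b μ x * v μ = -φ (x 0) * v b.succ := by
  rw [Fin.sum_univ_succ]
  simp [ymA_zero, ymA_succ, eta]

lemma sum_eps_mul_ymA_mul_curl_ymA (a : Fin 3) (ν : Fin 4) (x : Fin 4 → ℝ) :
    ∑ b, ∑ c, eps a b c *
      ∑ μ, (eta μ * ymA φ b μ x) * (pd μ (ymA φ c ν) x - pd ν (ymA φ c μ) x) = 0 := by
  refine Finset.sum_eq_zero fun b _ => Finset.sum_eq_zero fun c _ => ?_
  rw [sum_eta_mul_ymA_mul, pd_ymA_of_ne φ b.succ_ne_zero]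
  obtain rfl | hbc := eq_or_ne b c
  · rw [eps_self_right, zero_mul]
  · have hzero : ymA φ c b.succ = 0 := funext fun y => by simp [ymA_succ, hbc]
    simp [hzero, pd_zero_fun]

lemma sum_eps_mul_eps_mul_ymA_cubic (a : Fin 3) (ν : Fin 4) (x : Fin 4 → ℝ) :
    ∑ b, ∑ c, ∑ d, ∑ e, eps a b c * eps c d e *
      ∑ μ, (eta μ * ymA φ b μ x) * ymA φ d μ x * ymA φ e ν x =
    2 * φ (x 0) ^ 2 * ymA φ a ν x := by
  have hcontract : ∀ b d e, ∑ μ, (eta μ * ymA φ b μ x) * ymA φ d μ x * ymA φ e ν x =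
      if b = d then -φ (x 0) ^ 2 * ymA φ e ν x else 0 := fun b d e => by
    rw [← Finset.sum_mul, sum_eta_mul_ymA_mul, ymA_succ]
    split_ifs <;> ring
  simp only [hcontract]
  rw [sum_eps_mul_eps_mul]
  simp only [Finset.sum_sub_distrib, if_true, Finset.sum_ite_eq', Finset.mem_univ,
    Finset.sum_const, Finset.card_univ, Fintype.card_fin, nsmul_eq_mul]
  push_cast
  ring

lemma ymLHS_eq_ymA (g α : ℝ) (a : Fin 3) (ν : Fin 4) (x : Fin 4 → ℝ) :
    ymLHS g α φ a ν x = ymA (fun t => deriv (deriv φ) t + 2 * g ^ 2 * φ t ^ 3) a ν x := by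
  have hdiv : (fun y => ∑ μ, eta μ * pd μ (ymA φ a μ) y) = 0 :=
    funext fun y => by simp [pd_ymA_self]
  have hdivMul : ∀ b c μ, pd μ (fun y => ymA φ b μ y * ymA φ c ν y) = 0 := fun b c μ =>
    pd_ymA_mul φ b μ (dependsOn_ymA φ c ν)
  rw [ymLHS, sum_eta_mul_pd_pd_ymA, hdiv, pd_zero_fun, sum_eps_mul_ymA_mul_curl_ymA,
    sum_eps_mul_eps_mul_ymA_cubic]
  simp only [hdivMul, Pi.zero_apply, mul_zero, Finset.sum_const_zero, sub_zero, add_zero]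
  simp only [ymA]
  split_ifs <;> ring

end Potential

/-- Mapping theorem (exact SU(2) time-dependent case): the potential
`A^a_ν(x) = η^a_ν φ(x₀)` satisfies the Lorenz gauge condition `∂^μ A^a_μ = 0`, and it
satisfies the full vacuum SU(2) Yang-Mills equations if and only if `φ'' + 2g²φ³ = 0`,
i.e. `□φ + λφ³ = 0` with `λ = Ng²`, `N = 2`. -/
theorem stmt_7 (g α : ℝ) (hg : g ≠ 0) (hα : α ≠ 0) (φ : ℝ → ℝ)
    (hφ1 : Differentiable ℝ φ) (hφ2 : Differentiable ℝ (deriv φ)) :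
    (∀ (a : Fin 3) (x : Fin 4 → ℝ), ∑ μ : Fin 4, eta μ * pd μ (ymA φ a μ) x = 0) ∧
    ((∀ (a : Fin 3) (ν : Fin 4) (x : Fin 4 → ℝ), ymLHS g α φ a ν x = 0) ↔
      (∀ t : ℝ, deriv (deriv φ) t + 2 * g ^ 2 * (φ t) ^ 3 = 0)) := by
  refine ⟨fun a x => by simp [pd_ymA_self], ?_⟩
  simp only [ymLHS_eq_ymA]
  exact forall_ymA_eq_zero_iff _
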